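/- Let 𝒲, 𝒰, 𝒞, 𝒳 be measurable spaces, κ a Markov kernel from 𝒰 to 𝒲, ν_p and ν_q Markov kernels from 𝒞 × 𝒳 to 𝒰, μ_p and μ_q σ-finite measures on 𝒰 with μ_q ≪ μ_p, ρ a Markov kernel from 𝒳 to 𝒞 (the target conditional law Q(C | x)), and h_p, h_q : 𝒲 × 𝒞 → ℝ, g : 𝒞 × 𝒰 → ℝ bounded measurable. Assume: (i) for all c, x: ∫_𝒰 g(c,u) dν_p((c,x)) = ∫_𝒰 (∫_𝒲 h_p(w,c) dκ(u)) dν_p((c,x)), and the same with (ν_q, h_q); (ii) for f ∈ {p, q}, for every c and every bounded measurable ℓ : 𝒰 → ℝ, (∀x, ∫_𝒰 ℓ dν_f((c,x)) = 0) implies ℓ = 0 μ_f-a.e.; (iii) for all c, x, the measure ν_q((c,x)) is absolutely continuous with respect to μ_q. Then for every x ∈ 𝒳: ∫_𝒞 [∫_𝒰 (∫_𝒲 h_q(w,c) dκ(u)(w)) dν_q((c,x))(u)] dρ(x)(c) = ∫_𝒞 [∫_𝒰 (∫_𝒲 h_p(w,c) dκ(u)(w)) dν_q((c,x))(u)] dρ(x)(c).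 In particular, the target-domain mean E_q[Y | x] equals the integral of the source bridge function h_p against the target distribution of (W, C) given x. -/

import Mathlib

open MeasureTheory ProbabilityTheory

/-!
For fixed `c`, the bridge equation says that `g (c, ·)` and `u ↦ ∫ w, h (w, c) ∂κ u` have the same
integral against every source law `νp (c, x)`. Completeness upgrades this to almost everywhere
equality with respect to the source `U`-marginal. That equality between two domain-invariant
functions of `u` passes to every target law `νq (c, x)` by absolute continuity, so the source bridge
also solves the target bridge equation. Any two solutions of that equation have the same conditional
mean, which is then averaged over `c`.
-/

/-- Bounded completeness of a family of laws `ν i`, the statistical notion that makes bridge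
equations identify functions: the only bounded measurable function with zero integral against every
`ν i` is zero. The null sets are those of a separate reference measure `μ`, here the marginal law of
the latent variable. -/
def IsBoundedlyComplete {I U : Type*} [MeasurableSpace U] (ν : I → Measure U) (μ : Measure U) :
    Prop :=
  ∀ ℓ : U → ℝ, Measurable ℓ → (∃ M, ∀ u, |ℓ u| ≤ M) → (∀ i, ∫ u, ℓ u ∂(ν i) = 0) → ℓ =ᵐ[μ] 0

/-- An outcome bridge function of proximal causal inference: a bounded measurable `h` of the proxy
and the covariate whose proxy average `∫ w, h (w, c) ∂κ u` has the same conditional mean as the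
outcome regression `g (c, u)`. The conditional laws `ν (c, x)` of the latent variable are a bare
family of measures rather than a kernel, so that `X` carries no measurable structure. -/
structure IsOutcomeBridge {W U C X : Type*} [MeasurableSpace W] [MeasurableSpace U]
    [MeasurableSpace C] (κ : Kernel U W) (ν : C × X → Measure U) (g : C × U → ℝ)
    (h : W × C → ℝ) : Prop where
  measurable : Measurable h
  bounded : ∃ M, ∀ z, |h z| ≤ M
  integral_eq : ∀ c x, ∫ u, g (c, u) ∂(ν (c, x)) = ∫ u, (∫ w, h (w, c) ∂(κ u)) ∂(ν (c, x))

theorem exists_norm_integral_kernel_le {W U E : Type*} [MeasurableSpace W] [MeasurableSpace U]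
    [NormedAddCommGroup E] [NormedSpace ℝ E] (κ : Kernel U W) [IsFiniteKernel κ] {f : U → W → E}
    (hf : ∃ M, ∀ u w, ‖f u w‖ ≤ M) : ∃ M, ∀ u, ‖∫ w, f u w ∂(κ u)‖ ≤ M := by
  obtain ⟨M, hM⟩ := hf
  refine ⟨|M| * κ.bound.toReal, fun u ↦ ?_⟩
  calc ‖∫ w, f u w ∂(κ u)‖ ≤ |M| * (κ u).real Set.univ :=
        norm_integral_le_of_norm_le_const (.of_forall fun w ↦ (hM u w).trans (le_abs_self M))
    _ ≤ |M| * κ.bound.toReal := by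
        gcongr
        exact ENNReal.toReal_mono κ.bound_ne_top (κ.measure_le_bound u _)

theorem IsBoundedlyComplete.ae_eq_of_forall_integral_eq {I U : Type*} [MeasurableSpace U]
    {ν : I → Measure U} [∀ i, IsFiniteMeasure (ν i)] {μ : Measure U}
    (hν : IsBoundedlyComplete ν μ) {f₁ f₂ : U → ℝ}
    (hf₁ : Measurable f₁) (hf₁_bdd : ∃ M, ∀ u, |f₁ u| ≤ M)
    (hf₂ : Measurable f₂) (hf₂_bdd : ∃ M, ∀ u, |f₂ u| ≤ M)
    (h : ∀ i, ∫ u, f₁ u ∂(ν i) = ∫ u, f₂ u ∂(ν i)) : f₁ =ᵐ[μ] f₂ := by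
  obtain ⟨M₁, hM₁⟩ := hf₁_bdd
  obtain ⟨M₂, hM₂⟩ := hf₂_bdd
  have sub_bdd (u : U) : |f₁ u - f₂ u| ≤ M₁ + M₂ :=
    (abs_sub _ _).trans (add_le_add (hM₁ u) (hM₂ u))
  have integral_sub_eq_zero (i : I) : ∫ u, (f₁ u - f₂ u) ∂(ν i) = 0 := by
    rw [integral_sub (.of_bound hf₁.aestronglyMeasurable M₁ (.of_forall hM₁))
      (.of_bound hf₂.aestronglyMeasurable M₂ (.of_forall hM₂)), h i, sub_self]
  filter_upwards [hν _ (hf₁.sub hf₂) ⟨_, sub_bdd⟩ integral_sub_eq_zero] with u hu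
  exact sub_eq_zero.mp hu

section OutcomeBridge

variable {W U C X : Type*} [MeasurableSpace W] [MeasurableSpace U] [MeasurableSpace C]
  {κ : Kernel U W} [IsFiniteKernel κ] {ν : C × X → Measure U} [∀ z, IsFiniteMeasure (ν z)]
  {μ : Measure U} {g : C × U → ℝ} {h : W × C → ℝ}

theorem IsOutcomeBridge.ae_eq_integral_kernel (hh : IsOutcomeBridge κ ν g h)
    (hg : Measurable g) (hg_bdd : ∃ M, ∀ z, |g z| ≤ M) {c : C}
    (hν : IsBoundedlyComplete (fun x ↦ ν (c, x)) μ) :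
    (fun u ↦ g (c, u)) =ᵐ[μ] fun u ↦ ∫ w, h (w, c) ∂(κ u) := by
  have proxy_measurable : Measurable fun u ↦ ∫ w, h (w, c) ∂(κ u) :=
    (hh.measurable.comp measurable_prodMk_right).stronglyMeasurable.integral_kernel.measurable
  have proxy_bdd : ∃ M, ∀ u, |∫ w, h (w, c) ∂(κ u)| ≤ M :=
    exists_norm_integral_kernel_le κ (f := fun _ w ↦ h (w, c))
      (hh.bounded.imp fun _ hM _ w ↦ hM (w, c))
  exact hν.ae_eq_of_forall_integral_eq (hg.comp measurable_prodMk_left)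
    (hg_bdd.imp fun _ hM u ↦ hM (c, u)) proxy_measurable proxy_bdd (hh.integral_eq c)

theorem source_bridge_transfers_general {X' : Type*} {ν' : C × X' → Measure U}
    (hh : IsOutcomeBridge κ ν g h) (hg : Measurable g) (hg_bdd : ∃ M, ∀ z, |g z| ≤ M)
    (hν : ∀ c, IsBoundedlyComplete (fun x ↦ ν (c, x)) μ) (hν' : ∀ z, ν' z ≪ μ) :
    IsOutcomeBridge κ ν' g h where
  measurable := hh.measurable
  bounded := hh.bounded
  integral_eq c x :=
    integral_congr_ae ((hν' (c, x)).ae_eq (hh.ae_eq_integral_kernel hg hg_bdd (hν c)))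

end OutcomeBridge

/-- Part 2 of the main identification theorem: the source bridge function
`h_p` transfers to the target domain, identifying `E_q[Y | x]` from target
observables, i.e. the target-domain mean computed with the target bridge
function `h_q` equals the one computed with the source bridge function
`h_p`. -/
theorem source_bridge_transfers
    {W U C X : Type*} [MeasurableSpace W] [MeasurableSpace U]
    [MeasurableSpace C] [MeasurableSpace X]
    (κ : Kernel U W) [IsMarkovKernel κ]
    (νp νq : Kernel (C × X) U) [IsMarkovKernel νp] [IsMarkovKernel νq]
    (μp μq : Measure U) [SigmaFinite μp] [SigmaFinite μq]
    (hac : μq ≪ μp)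
    (ρ : Kernel X C) [IsMarkovKernel ρ]
    (hp hq : W × C → ℝ) (g : C × U → ℝ)
    (hpm : Measurable hp) (hpb : ∃ M, ∀ z, |hp z| ≤ M)
    (hqm : Measurable hq) (hqb : ∃ M, ∀ z, |hq z| ≤ M)
    (hgm : Measurable g) (hgb : ∃ M, ∀ z, |g z| ≤ M)
    (hbridge_p : ∀ c x, ∫ u, g (c, u) ∂(νp (c, x)) =
      ∫ u, (∫ w, hp (w, c) ∂(κ u)) ∂(νp (c, x)))
    (hbridge_q : ∀ c x, ∫ u, g (c, u) ∂(νq (c, x)) =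
      ∫ u, (∫ w, hq (w, c) ∂(κ u)) ∂(νq (c, x)))
    (hcomplete_p : ∀ (c : C) (ℓ : U → ℝ), Measurable ℓ →
      (∃ M, ∀ u, |ℓ u| ≤ M) →
      (∀ x, ∫ u, ℓ u ∂(νp (c, x)) = 0) → ℓ =ᵐ[μp] 0)
    (hcomplete_q : ∀ (c : C) (ℓ : U → ℝ), Measurable ℓ →
      (∃ M, ∀ u, |ℓ u| ≤ M) →
      (∀ x, ∫ u, ℓ u ∂(νq (c, x)) = 0) → ℓ =ᵐ[μq] 0)
    (hsupp : ∀ c x, νq (c, x) ≪ μq) :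
    ∀ x : X,
      (∫ c, (∫ u, (∫ w, hq (w, c) ∂(κ u)) ∂(νq (c, x))) ∂(ρ x)) =
      ∫ c, (∫ u, (∫ w, hp (w, c) ∂(κ u)) ∂(νq (c, x))) ∂(ρ x) := by
  intro x
  have hp_transfers : IsOutcomeBridge κ νq g hp :=
    source_bridge_transfers_general ⟨hpm, hpb, hbridge_p⟩ hgm hgb hcomplete_p
      fun z ↦ (hsupp z.1 z.2).trans hac
  exact integral_congr_ae (.of_forall fun c ↦
    (hbridge_q c x).symm.trans (hp_transfers.integral_eq c x))
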